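/- Let t ≥ 3 be an integer and let M be a matroid admitting a cyclic (t−1,t)-ordering e_1, e_2, …, e_n with n ≥ 6t−10. Then for every index i: every t-element circuit C of M containing X_i satisfies C ⊆ σ[i−1, i+t−1], and every t-element cocircuit C* of M containing X_i satisfies C* ⊆ σ[i−1, i+t−1]. -/

import Mathlib

open Set

namespace CyclicArr

variable {α : Type*}

/-- `C` is a circuit of the matroid `M`: a minimal dependent set. -/
def Cct (M : Matroid α) (C : Set α) : Prop := Minimal M.Dep C

/-- The set of `len` consecutive elements `{e_i, e_{i+1}, …, e_{i+len-1}}`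
in a cyclic ordering `e`, subscripts mod `n`. -/
def seg {n : ℕ} (e : ZMod n → α) (i : ℤ) (len : ℕ) : Set α :=
  (fun k : ℕ => e ((i + k : ℤ) : ZMod n)) '' Set.Iio len

/-- `e` is a cyclic ordering of (the ground set of) `M`. -/
def CyclicOrd {n : ℕ} (M : Matroid α) (e : ZMod n → α) : Prop :=
  Function.Injective e ∧ Set.range e = M.E

/-- `e` is a cyclic `(t-1, t)`-ordering of `M`: every `t-1` consecutive elements
are contained in a `t`-element circuit and a `t`-element cocircuit. -/
def CyclicPropOrd {n : ℕ} (M : Matroid α) (t : ℕ) (e : ZMod n → α) : Prop :=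
  CyclicOrd M e ∧
  ∀ i : ℤ, (∃ C, Cct M C ∧ C.ncard = t ∧ seg e i (t-1) ⊆ C) ∧
           (∃ C, Cct M✶ C ∧ C.ncard = t ∧ seg e i (t-1) ⊆ C)

/-- Membership in the window of length `L` at `i` together with its extra element. -/
def Mm (L : ℤ) (c : ℤ → ℤ) (i x : ℤ) : Prop := (i ≤ x ∧ x < i + L) ∨ x = c i

/-- Linear orthogonality system on `[lo, hi)`. -/
def Lin (L lo hi : ℤ) (c d : ℤ → ℤ) : Prop :=
  (∀ i, lo ≤ i → i + L ≤ hi → ¬ (i ≤ c i ∧ c i < i + L) ∧ ¬ (i ≤ d i ∧ d i < i + L)) ∧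
  ∀ i k x, lo ≤ i → i + L ≤ hi → lo ≤ k → k + L ≤ hi → Mm L c i x → Mm L d k x →
    ∃ y, y ≠ x ∧ Mm L c i y ∧ Mm L d k y

lemma Lin.swap {L lo hi : ℤ} {c d : ℤ → ℤ} (h : Lin L lo hi c d) : Lin L lo hi d c := by
  refine ⟨fun i h1 h2 => (h.1 i h1 h2).symm, fun i k x h1 h2 h3 h4 h5 h6 => ?_⟩
  obtain ⟨y, a, b, c⟩ := h.2 k i x h3 h4 h1 h2 h6 h5
  exact ⟨y, a, c, b⟩

def rf (L : ℤ) (c : ℤ → ℤ) : ℤ → ℤ := fun i => - c (-i - L + 1)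

lemma Mm_rf {L : ℤ} {c : ℤ → ℤ} {i x : ℤ} : Mm L (rf L c) i x ↔ Mm L c (-i - L + 1) (-x) := by
  unfold Mm rf; constructor <;> rintro (h | h) <;> first | (left; omega) | (right; omega)

lemma Lin.refl {L lo hi : ℤ} {c d : ℤ → ℤ} (h : Lin L lo hi c d) :
    Lin L (1 - hi) (1 - lo) (rf L c) (rf L d) := by
  refine ⟨fun i h1 h2 => ?_, fun i k x h1 h2 h3 h4 h5 h6 => ?_⟩
  · have := h.1 (-i - L + 1) (by omega) (by omega)
    unfold rf; omega
  · rw [Mm_rf] at h5 h6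
    obtain ⟨y, a, b, c⟩ := h.2 _ _ _ (by omega) (by omega) (by omega) (by omega) h5 h6
    refine ⟨-y, by omega, ?_, ?_⟩ <;> rw [Mm_rf, neg_neg] <;> assumption

lemma near {L : ℤ} {c d : ℤ → ℤ} {i δ lo hi : ℤ} (hL : 2 ≤ L) (h2 : 2 ≤ δ) (hδ : δ ≤ L)
    (h : Lin L lo hi c d) (hlo : lo ≤ i + 1 - L) (hhi : i + 4 * L - 2 ≤ hi)
    (hc : c i = i + L - 1 + δ) : False := by
  obtain ⟨hn, ho⟩ := h
  unfold Mm at ho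
  obtain ⟨j, hj⟩ : ∃ j, j = i + L - 1 + δ := ⟨_, rfl⟩
  -- d j, d (j-1) in X_i
  have hp : i ≤ d j ∧ d j < i + L := by
    obtain ⟨y, hy⟩ := ho i j j (by omega) (by omega) (by omega) (by omega) (by omega) (by omega)
    omega
  have hq : i ≤ d (j-1) ∧ d (j-1) < i + L := by
    obtain ⟨y, hy⟩ := ho i (j-1) j (by omega) (by omega) (by omega) (by omega) (by omega) (by omega)
    omega
  obtain ⟨m, hm⟩ : ∃ m, m = j + L - 1 := ⟨_, rfl⟩
  have hcm : c m = d j := by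
    obtain ⟨y, hy⟩ := ho m j m (by omega) (by omega) (by omega) (by omega) (by omega) (by omega)
    have hnm := (hn m (by omega) (by omega)).1
    by_contra hne
    obtain ⟨z, hz⟩ := ho m (j-1) (c m) (by omega) (by omega) (by omega) (by omega) (by omega)
      (by omega)
    omega
  obtain ⟨k, hk⟩ : ∃ k, k = i + 1 - L := ⟨_, rfl⟩
  have hnk := (hn k (by omega) (by omega)).2
  have hp0 : d j ≠ i := by
    intro h0
    obtain ⟨y, hy⟩ := ho m k i (by omega) (by omega) (by omega) (by omega) (by omega) (by omega)
    obtain ⟨z, hz⟩ := ho i k i (by omega) (by omega) (by omega) (by omega) (by omega) (by omega)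
    omega
  have hc1 : j ≤ c (i+1) ∧ c (i+1) < j + L := by
    obtain ⟨y, hy⟩ := ho (i+1) j (d j) (by omega) (by omega) (by omega) (by omega) (by omega)
      (by omega)
    omega
  have hdk : d k = j := by
    obtain ⟨y, hy⟩ := ho i k i (by omega) (by omega) (by omega) (by omega) (by omega) (by omega)
    by_contra hne
    obtain ⟨z, hz⟩ := ho (i+1) k (d k) (by omega) (by omega) (by omega) (by omega) (by omega)
      (by omega)
    omega
  have hcL : k ≤ c (i+L) ∧ c (i+L) < k + L := by
    obtain ⟨y, hy⟩ := ho (i+L) k j (by omega) (by omega) (by omega) (by omega) (by omega) (by omega)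
    omega
  have hcL1 : k ≤ c (i+L+1) ∧ c (i+L+1) < k + L := by
    obtain ⟨y, hy⟩ := ho (i+L+1) k j (by omega) (by omega) (by omega) (by omega) (by omega)
      (by omega)
    omega
  have hn1 := (hn (i+1) (by omega) (by omega)).2
  have hd1 : d (i+1) = c (i+L) := by
    obtain ⟨y, hy⟩ := ho (i+L) (i+1) (i+L) (by omega) (by omega) (by omega) (by omega) (by omega)
      (by omega)
    by_contra hne
    obtain ⟨z, hz⟩ := ho (i+L+1) (i+1) (d (i+1)) (by omega) (by omega) (by omega) (by omega)
      (by omega) (by omega)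
    omega
  obtain ⟨y, hy⟩ := ho m (i+1) (d j) (by omega) (by omega) (by omega) (by omega) (by omega)
    (by omega)
  omega

lemma large {L : ℤ} {c d : ℤ → ℤ} {i j lo hi : ℤ} (hL : 2 ≤ L) (hj : i + 2 * L ≤ j)
    (h : Lin L lo hi c d) (hlo : lo ≤ i) (hhi : j + L ≤ hi)
    (hc : c i = j) : i ≤ d (j-1) ∧ d (j-1) < i + L ∧ c (j-L) = d (j-1) := by
  obtain ⟨hn, ho⟩ := h
  unfold Mm at ho
  have hp : i ≤ d j ∧ d j < i + L := by
    obtain ⟨y, hy⟩ := ho i j j (by omega) (by omega) (by omega) (by omega) (by omega) (by omega)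
    omega
  have hq : i ≤ d (j-1) ∧ d (j-1) < i + L := by
    obtain ⟨y, hy⟩ := ho i (j-1) j (by omega) (by omega) (by omega) (by omega) (by omega) (by omega)
    omega
  refine ⟨hq.1, hq.2, ?_⟩
  obtain ⟨y, hy⟩ := ho (j-L) (j-1) (j-1) (by omega) (by omega) (by omega) (by omega) (by omega)
    (by omega)
  have hnm := (hn (j-L) (by omega) (by omega)).1
  by_contra hne
  obtain ⟨z, hz⟩ := ho (j-L) j (c (j-L)) (by omega) (by omega) (by omega) (by omega) (by omega)
    (by omega)
  omega

/-- representative of `x` mod `n` in `[a, a+n)` -/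
def nm (n a x : ℤ) : ℤ := a + (x - a) % n

lemma nm_eq {n a x y : ℤ} (h1 : a ≤ y) (h2 : y < a + n) (h : n ∣ x - y) : nm n a x = y := by
  unfold nm
  have : (x - a) % n = (y - a) % n := by
    apply Int.emod_eq_emod_iff_emod_sub_eq_zero.2
    apply Int.emod_eq_zero_of_dvd
    rw [show x - a - (y - a) = x - y by ring]; exact h
  rw [this, Int.emod_eq_of_lt (by omega) (by omega)]; ring

lemma nm_spec {n : ℤ} (hn : 0 < n) (a x : ℤ) :
    a ≤ nm n a x ∧ nm n a x < a + n ∧ n ∣ x - nm n a x := by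
  unfold nm
  refine ⟨by have := Int.emod_nonneg (x - a) hn.ne'; omega,
    by have := Int.emod_lt_of_pos (x - a) hn; omega, ?_⟩
  have := Int.dvd_self_sub_emod (x := x - a) (m := n)
  convert this using 1; ring

def Sys (L n : ℤ) (c d : ℤ → ℤ) : Prop :=
  ∀ a, Lin L a (a + n) (fun i => nm n a (c i)) (fun i => nm n a (d i))

lemma Sys.swap {L n : ℤ} {c d : ℤ → ℤ} (h : Sys L n c d) : Sys L n d c := fun a => (h a).swap

lemma Sys.refl {L n : ℤ} {c d : ℤ → ℤ} (hn : 0 < n) (h : Sys L n c d) :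
    Sys L n (rf L c) (rf L d) := by
  have key : ∀ (a : ℤ) (c : ℤ → ℤ), (fun i => nm n a (rf L c i)) =
      rf L (fun i => nm n (1 - a - n) (c i)) := by
    intro a c
    funext i
    unfold rf
    obtain ⟨h1, h2, h3⟩ := nm_spec hn (1 - a - n) (c (-i - L + 1))
    beta_reduce
    apply nm_eq (by omega) (by omega)
    rw [← Int.dvd_neg]; convert h3 using 1; ring
  intro a
  rw [key, key]
  have := (h (1 - a - n)).refl
  convert this using 1 <;> ring

lemma main_int {L n : ℤ} (hL : 2 ≤ L) (hn : 6 * L - 4 ≤ n) (N : ℕ) :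
    ∀ (c d : ℤ → ℤ) (i δ : ℤ), Sys L n c d → δ ≤ N → 2 ≤ δ → δ ≤ n - 2 * L + 1 →
      n ∣ c i - (i + L - 1 + δ) → False := by
  induction N with
  | zero => intro c d i δ _ h h'; push_cast at h; omega
  | succ N ih =>
    intro c d i δ hS hN h2 hδ hc
    have left : ∀ (c d : ℤ → ℤ) (i δ : ℤ), Sys L n c d → δ ≤ N → 2 ≤ δ → δ ≤ n - 2 * L + 1 →
      n ∣ c i - (i - δ) → False := by
      intro c d i δ hS hN h2 hδ hc
      refine ih (rf L c) (rf L d) (-i - L + 1) δ (hS.refl (by omega)) hN h2 hδ ?_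
      unfold rf
      rw [← Int.dvd_neg]
      convert hc using 1
      rw [show -(-i - L + 1) - L + 1 = i by ring]; ring
    by_cases hδL : δ ≤ L
    · exact near hL h2 hδL (hS (i + 1 - L)) le_rfl (by omega) (i := i)
        (nm_eq (by omega) (by omega) hc)
    · obtain ⟨h1, h3, h4⟩ := large hL (i := i) (j := i + L - 1 + δ) (by omega) (hS i) le_rfl
        (by omega) (nm_eq (by omega) (by omega) hc)
      beta_reduce at h1 h3 h4
      push_cast at hN
      have s1 := (nm_spec (n := n) (by omega) i (d (i + L - 1 + δ - 1))).2.2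
      have s2 := (nm_spec (n := n) (by omega) i (c (i + L - 1 + δ - L))).2.2
      rw [h4] at s2
      generalize nm n i (d (i + L - 1 + δ - 1)) = q at *
      by_cases hq : q = i + L - 1
      · refine left d c (i + L - 1 + δ - 1) (δ - 1) hS.swap (by omega) (by omega)
          (by omega) ?_
        convert s1 using 1; rw [hq]; ring
      · refine left c d (i + L - 1 + δ - L) (i + L - 1 + δ - L - q) hS (by omega) (by omega)
          (by omega) ?_
        convert s2 using 1; ring

lemma final_int {L n : ℤ} (hL : 2 ≤ L) (hn : 6 * L - 4 ≤ n) (c d : ℤ → ℤ) (hS : Sys L n c d)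
    (i : ℤ) : n ∣ c i - (i - 1) ∨ n ∣ c i - (i + L) := by
  obtain ⟨h1, h2, h3⟩ := nm_spec (n := n) (by omega) i (c i)
  have h4 := ((hS i).1 i le_rfl (by omega)).1
  simp only at h4
  generalize nm n i (c i) = q at *
  by_contra hcon
  push Not at hcon
  have e1 : q ≠ i + L := by rintro rfl; exact hcon.2 h3
  have e2 : q ≠ i - 1 + n := by
    rintro rfl; apply hcon.1
    have := Int.dvd_add h3 (Int.dvd_refl n); convert this using 1; ring
  by_cases hq : q - i - L + 1 ≤ n - 2 * L + 1
  · refine main_int hL hn (q - i - L + 1).toNat c d i (q - i - L + 1) hS (by omega) (by omega) hq ?_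
    convert h3 using 1; ring
  · refine main_int hL hn (n + i - q).toNat (rf L c) (rf L d) (-i - L + 1) (n + i - q)
      (hS.refl (by omega)) (by omega) (by omega) (by omega) ?_
    unfold rf
    rw [← Int.dvd_neg]
    have := Int.dvd_add h3 (Int.dvd_refl n)
    convert this using 1
    rw [show -(-i - L + 1) - L + 1 = i by ring]; ring

lemma e_eq {n : ℕ} {e : ZMod n → α} (he : Function.Injective e) {x y : ℤ} :
    e (x : ZMod n) = e (y : ZMod n) ↔ (n : ℤ) ∣ x - y := by
  rw [he.eq_iff, eq_comm, ZMod.intCast_eq_intCast_iff_dvd_sub]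

lemma mem_seg {n : ℕ} {e : ZMod n → α} {i : ℤ} {len : ℕ} {a : α} :
    a ∈ seg e i len ↔ ∃ x : ℤ, i ≤ x ∧ x < i + len ∧ a = e (x : ZMod n) := by
  unfold seg
  constructor
  · rintro ⟨k, hk, rfl⟩
    simp only [Set.mem_Iio] at hk
    exact ⟨i + k, by omega, by omega, rfl⟩
  · rintro ⟨x, h1, h2, rfl⟩
    refine ⟨(x - i).toNat, by simp only [Set.mem_Iio]; omega, ?_⟩
    have : i + ((x - i).toNat : ℤ) = x := by omega
    simp only [this]

lemma seg_ncard {n : ℕ} {e : ZMod n → α} (he : Function.Injective e) (i : ℤ) {len : ℕ}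
    (h : len ≤ n) : (seg e i len).ncard = len := by
  unfold seg
  rw [Set.InjOn.ncard_image]
  · rw [← Finset.coe_Iio, Set.ncard_coe_finset]; simp
  · intro a ha b hb hab
    simp only [Set.mem_Iio] at ha hb
    simp only [e_eq he] at hab
    obtain ⟨q, hq⟩ := hab
    have : q = 0 := by
      by_contra h0
      rcases lt_or_gt_of_ne h0 with h | h <;> nlinarith
    subst this; simp at hq; omega

lemma exists_extra {n : ℕ} {e : ZMod n → α} (he : Function.Injective e) {L : ℕ}
    (hL : L ≤ n) {C : Set α} (i : ℤ) (hC : C.ncard = L + 1) (hCE : C ⊆ Set.range e)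
    (hs : seg e i L ⊆ C) :
    ∃ c : ℤ, e (c : ZMod n) ∉ seg e i L ∧ C = insert (e (c : ZMod n)) (seg e i L) := by
  have hfin : C.Finite := Set.finite_of_ncard_pos (by omega)
  have h1 : (C \ seg e i L).ncard = 1 := by
    rw [Set.ncard_sdiff hs (hfin.subset hs), seg_ncard he i hL]; omega
  obtain ⟨a, ha⟩ := Set.ncard_eq_one.1 h1
  have haC : a ∈ C \ seg e i L := by rw [ha]; rfl
  obtain ⟨z, rfl⟩ := hCE haC.1
  obtain ⟨c, rfl⟩ := ZMod.intCast_surjective z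
  refine ⟨c, haC.2, ?_⟩
  rw [← Set.sdiff_union_of_subset hs, ha]; rfl

lemma mem_iff {n : ℕ} {e : ZMod n → α} (he : Function.Injective e) (hn : 0 < n) {L : ℕ}
    {a i x c : ℤ} (h1 : a ≤ i) (h2 : i + L ≤ a + n) (h3 : a ≤ x) (h4 : x < a + n) :
    e (x : ZMod n) ∈ insert (e (c : ZMod n)) (seg e i L) ↔
      (i ≤ x ∧ x < i + L) ∨ x = nm n a c := by
  rw [Set.mem_insert_iff, mem_seg, or_comm]
  refine or_congr ?_ ?_
  · constructor
    · rintro ⟨y, hy1, hy2, hy3⟩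
      rw [e_eq he] at hy3
      have e1 := nm_eq (n := n) (a := a) (x := x) (y := y) (by omega) (by omega) hy3
      have e2 := nm_eq (n := n) (a := a) (x := x) (y := x) (by omega) (by omega) (by simp)
      omega
    · rintro ⟨h5, h6⟩; exact ⟨x, h5, h6, rfl⟩
  · rw [eq_comm, e_eq he]
    constructor
    · intro h; exact (nm_eq h3 h4 h).symm
    · rintro rfl; exact (nm_spec (by omega) a c).2.2

lemma one_side (M : Matroid α) (L n : ℕ) (hL : 2 ≤ L) (hn : 6 * L - 4 ≤ n)
    (e : ZMod n → α) (hi : Function.Injective e) (hr : Set.range e = M.E)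
    (hC : ∀ i : ℤ, ∃ C, M.IsCircuit C ∧ C.ncard = L + 1 ∧ seg e i L ⊆ C)
    (hD : ∀ i : ℤ, ∃ C, M.IsCocircuit C ∧ C.ncard = L + 1 ∧ seg e i L ⊆ C)
    (i : ℤ) (C : Set α) (hCC : M.IsCircuit C) (hCt : C.ncard = L + 1) (hCs : seg e i L ⊆ C) :
    C ⊆ seg e (i - 1) (L + 2) := by
  have hC' : ∀ k : ℤ, ∃ C', (M.IsCircuit C' ∧ C'.ncard = L + 1 ∧ seg e k L ⊆ C') ∧
      (k = i → C' = C) := by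
    intro k
    by_cases hk : k = i
    · subst hk; exact ⟨C, ⟨hCC, hCt, hCs⟩, fun _ => rfl⟩
    · obtain ⟨C', h⟩ := hC k; exact ⟨C', h, fun h => absurd h hk⟩
  choose F hF hFi using hC'
  choose G hG using hD
  have hxF : ∀ k, ∃ c : ℤ, e (c : ZMod n) ∉ seg e k L ∧ F k = insert (e (c : ZMod n)) (seg e k L) :=
    fun k => exists_extra hi (by omega) k (hF k).2.1 (hr ▸ (hF k).1.subset_ground) (hF k).2.2
  have hxG : ∀ k, ∃ c : ℤ, e (c : ZMod n) ∉ seg e k L ∧ G k = insert (e (c : ZMod n)) (seg e k L) :=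
    fun k => exists_extra hi (by omega) k (hG k).2.1 (hr ▸ (hG k).1.subset_ground) (hG k).2.2
  choose c hc hFc using hxF
  choose d hd hGd using hxG
  have nn : ∀ (a k : ℤ) (c : ℤ), e (c : ZMod n) ∉ seg e k L →
      ¬ (k ≤ nm n a c ∧ nm n a c < k + L) := by
    rintro a k c hc ⟨h1, h2⟩
    apply hc
    rw [mem_seg]
    exact ⟨_, h1, h2, (e_eq hi).2 (nm_spec (by omega) a c).2.2⟩
  have hS : Sys (L : ℤ) (n : ℤ) c d := by
    intro a
    refine ⟨fun k _ _ => ⟨nn a k _ (hc k), nn a k _ (hd k)⟩, ?_⟩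
    intro k l x h1 h2 h3 h4 h5 h6
    have hx : a ≤ x ∧ x < a + n := by
      rcases h5 with h5 | h5
      · omega
      · have := nm_spec (n := (n : ℤ)) (by omega) a (c k)
        simp only at h5; omega
    have m1 : e (x : ZMod n) ∈ F k := by
      rw [hFc, mem_iff hi (by omega) h1 h2 hx.1 hx.2]; exact h5
    have m2 : e (x : ZMod n) ∈ G l := by
      rw [hGd, mem_iff hi (by omega) h3 h4 hx.1 hx.2]; exact h6
    obtain ⟨b, hb, hbx⟩ := ((hF k).1.isCocircuit_inter_nontrivial (hG l).1 ⟨_, m1, m2⟩).exists_ne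
      (e (x : ZMod n))
    obtain ⟨z, rfl⟩ : b ∈ Set.range e := hr ▸ (hF k).1.subset_ground hb.1
    obtain ⟨y0, rfl⟩ := ZMod.intCast_surjective z
    obtain ⟨s1, s2, s3⟩ := nm_spec (n := (n : ℤ)) (by omega) a y0
    rw [(e_eq hi).2 s3] at hb hbx
    refine ⟨nm n a y0, fun h => hbx (by rw [h]), ?_, ?_⟩
    · have := hb.1
      rw [hFc, mem_iff hi (by omega) h1 h2 s1 s2] at this; exact this
    · have := hb.2
      rw [hGd, mem_iff hi (by omega) h3 h4 s1 s2] at this; exact this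
  have := final_int (by omega) (by omega) c d hS i
  rw [← hFi i rfl, hFc]
  intro b hb
  rw [mem_seg]
  rcases hb with rfl | hb
  · rcases this with h | h
    · exact ⟨i - 1, by omega, by omega, (e_eq hi).2 h⟩
    · exact ⟨i + L, by omega, by omega, (e_eq hi).2 h⟩
  · obtain ⟨x, h1, h2, h3⟩ := mem_seg.1 hb
    exact ⟨x, by omega, by omega, h3⟩

/-- With `t ≥ 3` and `n ≥ 6t-10`, every `t`-element circuit or cocircuit
containing `X_i` is contained in `σ[i-1, i+t-1]` (a window of `t+1` consecutive elements
starting at position `i-1`). -/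
theorem statement_5 (M : Matroid α) (t n : ℕ) (ht : 3 ≤ t) (hn : 6 * t - 10 ≤ n)
    (e : ZMod n → α) (he : CyclicPropOrd M t e) :
    ∀ i : ℤ,
      (∀ C : Set α, Cct M C → C.ncard = t → seg e i (t - 1) ⊆ C →
        C ⊆ seg e (i - 1) (t + 1)) ∧
      (∀ C : Set α, Cct M✶ C → C.ncard = t → seg e i (t - 1) ⊆ C →
        C ⊆ seg e (i - 1) (t + 1)) := by
  obtain ⟨L, rfl⟩ : ∃ L, t = L + 1 := ⟨t - 1, by omega⟩
  obtain ⟨⟨hi, hr⟩, h⟩ := he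
  simp only [Nat.add_sub_cancel] at *
  intro i
  refine ⟨fun C h1 h2 h3 => ?_, fun C h1 h2 h3 => ?_⟩
  · exact one_side M L n (by omega) (by omega) e hi hr (fun i => (h i).1) (fun i => (h i).2)
      i C h1 h2 h3
  · refine one_side M✶ L n (by omega) (by omega) e hi hr (fun i => (h i).2) (fun i => ?_)
      i C h1 h2 h3
    obtain ⟨C, k1, k2⟩ := (h i).1
    exact ⟨C, Matroid.IsCircuit.isCocircuit k1, k2⟩

end CyclicArr
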